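/- Let (f_μ)_{μ≥1} be a sequence of nonnegative measurable functions on [0,∞) such that lim_{μ→∞} ∫_t^∞ f_μ dt = 0 for every t ≥ 0 and ∫_t^∞ f_μ dt → 0 as t → ∞ for every μ. Then for any ε > 0 there exists a sequence t_1 < t_2 < ⋯ → ∞ with t_{k+1} ≥ t_k + 2/ε and ∫_{t_k}^∞ f_μ dt ≤ (k+1)^{-3} for all μ and k; consequently Σ_{k=1}^∞ (k+1) ∫_{t_k}^{t_{k+1}} f_μ dt < ∞ for every μ, and there exists a smooth monotone function g : ℝ → [1,∞) with g(t_k) = √k for k ≥ 1 and g' ≤ ε such that ∫_0^∞ g(t)² f_μ(t) dt < ∞ for all μ. -/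

import Mathlib

open MeasureTheory

theorem Real.smoothTransition.exists_deriv_le :
    ∃ C : ℝ, 0 ≤ C ∧ ∀ x, deriv Real.smoothTransition x ≤ C := by
  have hcont : Continuous (deriv Real.smoothTransition) :=
    (Real.smoothTransition.contDiff (n := 1)).continuous_deriv le_rfl
  obtain ⟨C, hC⟩ := (isCompact_Icc (a := (0 : ℝ)) (b := 1)).exists_bound_of_continuousOn
    hcont.continuousOn
  have hC0 : 0 ≤ C := (norm_nonneg _).trans (hC 0 (by simp))
  refine ⟨C, hC0, fun x => ?_⟩
  by_cases hx : x ∈ Set.Icc (0 : ℝ) 1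
  · exact (le_abs_self _).trans (hC x hx)
  rcases lt_or_ge x 0 with h0 | h0
  · have : Real.smoothTransition =ᶠ[nhds x] fun _ => 0 := by
      filter_upwards [gt_mem_nhds h0] with y hy
      exact Real.smoothTransition.zero_of_nonpos hy.le
    simpa [this.deriv_eq] using hC0
  · have h1 : 1 < x := by
      by_contra! h
      exact hx ⟨h0, h⟩
    have : Real.smoothTransition =ᶠ[nhds x] fun _ => 1 := by
      filter_upwards [lt_mem_nhds h1] with y hy
      exact Real.smoothTransition.one_of_one_le hy.le
    simpa [this.deriv_eq] using hC0

/-- A smooth staircase climbing by `a k` on `[t k, t k + d k]`; its slope is controlled by the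
sum of the slopes of all steps. -/
theorem exists_smooth_staircase {C : ℝ} (hC : ∀ x, deriv Real.smoothTransition x ≤ C)
    {a d t : ℕ → ℝ} {ε : ℝ} (ha : ∀ k, 0 ≤ a k) (hd : ∀ k, 0 < d k)
    (htd : ∀ k, t k + d k ≤ t (k + 1)) (ht : Filter.Tendsto t Filter.atTop Filter.atTop)
    (hslope : ∀ n, ∑ k ∈ Finset.range n, a k * C / d k ≤ ε) :
    ∃ g : ℝ → ℝ, ContDiff ℝ (⊤ : ℕ∞) g ∧ Monotone g ∧ (∀ r ≤ t 0, g r = 0) ∧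
      (∀ n, g (t n) = ∑ k ∈ Finset.range n, a k) ∧ ∀ r, deriv g r ≤ ε := by
  have hmono : Monotone t := monotone_nat_of_le_succ fun k => by linarith [htd k, hd k]
  set G : ℕ → ℝ → ℝ := fun n x =>
    ∑ k ∈ Finset.range n, a k * Real.smoothTransition ((x - t k) / d k) with hG
  let g : ℝ → ℝ := fun x => ∑' k, a k * Real.smoothTransition ((x - t k) / d k)
  have hgG : ∀ n x, x ≤ t n → g x = G n x := by
    intro n x hx
    refine tsum_eq_sum fun k hk => ?_
    have hnk : n ≤ k := by simpa using hk
    rw [Real.smoothTransition.zero_of_nonpos, mul_zero]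
    exact div_nonpos_of_nonpos_of_nonneg (by linarith [hmono hnk]) (hd k).le
  have hgG' : ∀ n x, x < t n → g =ᶠ[nhds x] G n := by
    intro n x hx
    filter_upwards [gt_mem_nhds hx] with y hy
    exact hgG n y hy.le
  have hlt : ∀ x, ∃ n, x < t n := fun x => (ht.eventually_gt_atTop x).exists
  have hGsmooth : ∀ n, ContDiff ℝ (⊤ : ℕ∞) (G n) := by
    intro n
    refine ContDiff.sum fun k _ => contDiff_const.mul ?_
    exact Real.smoothTransition.contDiff.comp ((contDiff_id.sub contDiff_const).div_const _)
  have hGderiv : ∀ n x, HasDerivAt (G n) (∑ k ∈ Finset.range n,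
      a k * (deriv Real.smoothTransition ((x - t k) / d k) * (1 / d k))) x := by
    intro n x
    refine HasDerivAt.fun_sum fun k _ => HasDerivAt.const_mul _ ?_
    have hφ := ((Real.smoothTransition.contDiff (n := 1)).differentiable
      one_ne_zero ((x - t k) / d k)).hasDerivAt
    exact hφ.comp x (((hasDerivAt_id x).sub_const (t k)).div_const (d k))
  refine ⟨g, ?_, ?_, ?_, ?_, ?_⟩
  · refine contDiff_iff_contDiffAt.2 fun x => ?_
    obtain ⟨n, hn⟩ := hlt x
    exact (hGsmooth n).contDiffAt.congr_of_eventuallyEq (hgG' n x hn)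
  · intro x y hxy
    obtain ⟨n, hn⟩ := hlt y
    rw [hgG n x (hxy.trans hn.le), hgG n y hn.le]
    refine Finset.sum_le_sum fun k _ => mul_le_mul_of_nonneg_left ?_ (ha k)
    exact Real.smoothTransition.monotone
      (div_le_div_of_nonneg_right (by linarith) (hd k).le)
  · intro r hr
    simp [hgG 0 r hr, hG]
  · intro n
    rw [hgG n _ le_rfl]
    refine Finset.sum_congr rfl fun k hk => ?_
    have hkn : t (k + 1) ≤ t n := hmono (Finset.mem_range.1 hk)
    rw [Real.smoothTransition.one_of_one_le, mul_one]
    rw [le_div_iff₀ (hd k)]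
    linarith [htd k]
  · intro r
    obtain ⟨n, hn⟩ := hlt r
    rw [(hgG' n r hn).deriv_eq, (hGderiv n r).deriv]
    refine (Finset.sum_le_sum fun k _ => ?_).trans (hslope n)
    rw [mul_div_assoc, div_eq_mul_one_div C]
    exact mul_le_mul_of_nonneg_left (mul_le_mul_of_nonneg_right (hC _)
      (one_div_nonneg.2 (hd k).le)) (ha k)

/-- Tails of nonnegative functions that vanish along the sequence and at infinity
are uniformly small. -/
theorem exists_forall_setIntegral_Ici_le {f : ℕ → ℝ → ℝ} (hnonneg : ∀ μ x, 0 ≤ f μ x)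
    (hint : ∀ μ (t : ℝ), IntegrableOn (f μ) (Set.Ici t))
    (h1 : Filter.Tendsto (fun μ => ∫ x in Set.Ici (0 : ℝ), f μ x) Filter.atTop (nhds 0))
    (h2 : ∀ μ, Filter.Tendsto (fun t : ℝ => ∫ x in Set.Ici t, f μ x) Filter.atTop (nhds 0))
    {δ : ℝ} (hδ : 0 < δ) :
    ∃ T : ℝ, ∀ μ, ∀ s ≥ T, ∫ x in Set.Ici s, f μ x ≤ δ := by
  obtain ⟨M, hM⟩ := Filter.eventually_atTop.1 (h1.eventually_le_const hδ)
  have hfin : ∀ᶠ s : ℝ in Filter.atTop, ∀ μ ∈ Finset.range M, ∫ x in Set.Ici s, f μ x ≤ δ :=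
    (Filter.eventually_all_finset _).2 fun μ _ => (h2 μ).eventually_le_const hδ
  obtain ⟨T, hT⟩ := Filter.eventually_atTop.1 hfin
  refine ⟨max T 0, fun μ s hs => ?_⟩
  rcases lt_or_ge μ M with hμ | hμ
  · exact hT s ((le_max_left _ _).trans hs) μ (Finset.mem_range.2 hμ)
  · exact (setIntegral_mono_set (hint μ 0) (Filter.Eventually.of_forall (hnonneg μ))
      (Set.Ici_subset_Ici.2 ((le_max_right _ _).trans hs)).eventuallyLE).trans (hM μ hμ)

/-- If `w` is bounded by `c k` on the `k`-th interval, then `w * h` is integrable as soon as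
the correspondingly weighted integrals of `h` are summable. -/
theorem integrableOn_Ioi_mul_of_summable {h w : ℝ → ℝ} {t c : ℕ → ℝ}
    (ht : Monotone t) (htop : Filter.Tendsto t Filter.atTop Filter.atTop)
    (hh : ∀ x, 0 ≤ h x) (hint : IntegrableOn h (Set.Ioi (t 0))) (hw : Continuous w)
    (hwc : ∀ k, ∀ x ∈ Set.Ioc (t k) (t (k + 1)), |w x| ≤ c k)
    (hsum : Summable fun k => c k * ∫ x in Set.Ioc (t k) (t (k + 1)), h x) :
    IntegrableOn (fun x => w x * h x) (Set.Ioi (t 0)) := by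
  have hunion : ⋃ k, Set.Ioc (t k) (t (k + 1)) = Set.Ioi (t 0) :=
    iUnion_Ioc_map_succ_eq_Ioi (fun k => ht (Nat.zero_le k))
      (Filter.not_bddAbove_of_tendsto_atTop htop)
  have hintk : ∀ k, IntegrableOn h (Set.Ioc (t k) (t (k + 1))) := fun k =>
    hint.mono_set fun x hx => (ht (Nat.zero_le k)).trans_lt hx.1
  have hwint : ∀ k, IntegrableOn (fun x => w x * h x) (Set.Ioc (t k) (t (k + 1))) := fun k =>
    (hintk k).bdd_mul hw.aestronglyMeasurable
      (ae_restrict_of_forall_mem measurableSet_Ioc (hwc k))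
  rw [← hunion]
  refine integrableOn_iUnion_of_summable_integral_norm hwint
    (hsum.of_nonneg_of_le (fun k => integral_nonneg fun x => norm_nonneg _) fun k => ?_)
  rw [← integral_const_mul]
  refine setIntegral_mono_on (hwint k).norm ((hintk k).const_mul _) measurableSet_Ioc
    fun x hx => ?_
  rw [norm_mul, Real.norm_of_nonneg (hh x)]
  exact mul_le_mul_of_nonneg_right (hwc k x hx) (hh x)


/-- Measure-theoretic core of Lemma 9.4 (lemGFunction): given nonnegative
`f_μ` with `∫_t^∞ f_μ → 0` as `μ → ∞` (for each `t`) and as `t → ∞` (for each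
`μ`), and `ε > 0`, there is a sequence `t_k ↑ ∞` with `t_{k+1} ≥ t_k + 2/ε`
and `∫_{t_k}^∞ f_μ ≤ (k+1)⁻³` for all `μ, k`; consequently
`∑_k (k+1) ∫_{t_k}^{t_{k+1}} f_μ < ∞`, and there is a smooth monotone
`g : ℝ → [1,∞)` with `g(t_k) = √k` and `g' ≤ ε` such that
`∫_0^∞ g² f_μ < ∞` for all `μ`.  (Here `t k` denotes `t_{k+1}`, so the bound
reads `((k+2))⁻¹ ^ 3` and `g (t k) = √(k+1)`.) -/
theorem stmt4 (f : ℕ → ℝ → ℝ)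
    (hmeas : ∀ μ, Measurable (f μ))
    (hnonneg : ∀ μ x, 0 ≤ f μ x)
    (hint : ∀ μ (t : ℝ), IntegrableOn (f μ) (Set.Ici t))
    (h1 : ∀ t : ℝ, 0 ≤ t → Filter.Tendsto (fun μ => ∫ x in Set.Ici t, f μ x)
      Filter.atTop (nhds 0))
    (h2 : ∀ μ, Filter.Tendsto (fun t : ℝ => ∫ x in Set.Ici t, f μ x)
      Filter.atTop (nhds 0))
    (ε : ℝ) (hε : 0 < ε) :
    ∃ t : ℕ → ℝ, StrictMono t ∧
      Filter.Tendsto t Filter.atTop Filter.atTop ∧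
      (∀ k, t k + 2 / ε ≤ t (k + 1)) ∧
      (∀ μ k, (∫ x in Set.Ici (t k), f μ x) ≤ (((k : ℝ) + 2)⁻¹) ^ 3) ∧
      (∀ μ, Summable (fun k : ℕ =>
        ((k : ℝ) + 2) * ∫ x in Set.Ioc (t k) (t (k + 1)), f μ x)) ∧
      ∃ g : ℝ → ℝ, ContDiff ℝ (⊤ : ℕ∞) g ∧ Monotone g ∧ (∀ r, 1 ≤ g r) ∧
        (∀ k : ℕ, g (t k) = Real.sqrt ((k : ℝ) + 1)) ∧
        (∀ r, deriv g r ≤ ε) ∧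
        ∀ μ, IntegrableOn (fun x => (g x) ^ 2 * f μ x) (Set.Ici 0) := by
  obtain ⟨C, hC0, hC⟩ := Real.smoothTransition.exists_deriv_le
  have hT : ∀ k : ℕ, ∃ T : ℝ, ∀ μ, ∀ s ≥ T,
      ∫ x in Set.Ici s, f μ x ≤ (((k : ℝ) + 2)⁻¹) ^ 3 := fun k =>
    exists_forall_setIntegral_Ici_le hnonneg hint (h1 0 le_rfl) h2 (by positivity)
  choose T hT using hT
  set d : ℕ → ℝ := fun k => 2 * (C + 1) * 2 ^ k / ε with hd
  have hd_ge : ∀ k, 2 / ε ≤ d k := fun k => by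
    refine div_le_div_of_nonneg_right ?_ hε.le
    nlinarith [one_le_pow₀ (M₀ := ℝ) one_le_two (n := k)]
  have hd_pos : ∀ k, 0 < d k := fun k => (by positivity : 0 < 2 / ε).trans_le (hd_ge k)
  let t : ℕ → ℝ := fun n => Nat.rec (max 0 (T 0)) (fun k s => max (s + d k) (T (k + 1))) n
  have ht0 : 0 ≤ t 0 := le_max_left _ _
  have htT : ∀ k, T k ≤ t k := by
    rintro (_ | k) <;> exact le_max_right _ _
  have htd : ∀ k, t k + d k ≤ t (k + 1) := fun k => le_max_left _ _
  have ht_strict : StrictMono t := strictMono_nat_of_lt_succ fun k => by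
    linarith [htd k, hd_pos k]
  have ht_top : Filter.Tendsto t Filter.atTop Filter.atTop := by
    have hlin : ∀ k : ℕ, (k : ℝ) * (2 / ε) ≤ t k := by
      intro k
      induction k with
      | zero => simpa using ht0
      | succ k ih =>
        push_cast
        linarith [htd k, hd_ge k]
    exact Filter.tendsto_atTop_mono hlin
      (tendsto_natCast_atTop_atTop.atTop_mul_const (by positivity))
  have htail : ∀ μ k, (∫ x in Set.Ici (t k), f μ x) ≤ (((k : ℝ) + 2)⁻¹) ^ 3 :=
    fun μ k => hT k μ _ (htT k)
  have hsum : ∀ μ, Summable (fun k : ℕ =>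
      ((k : ℝ) + 2) * ∫ x in Set.Ioc (t k) (t (k + 1)), f μ x) := by
    intro μ
    have hsq : Summable fun k : ℕ => (((k : ℝ) + 2)⁻¹) ^ 2 := by
      have := (summable_nat_add_iff 2).2 (Real.summable_nat_pow_inv.2 one_lt_two)
      simpa using this
    refine hsq.of_nonneg_of_le (fun k => mul_nonneg (by positivity)
      (integral_nonneg (hnonneg μ))) fun k => ?_
    have hle : ∫ x in Set.Ioc (t k) (t (k + 1)), f μ x ≤ (((k : ℝ) + 2)⁻¹) ^ 3 :=
      (setIntegral_mono_set (hint μ _) (Filter.Eventually.of_forall (hnonneg μ))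
        (Set.Ioc_subset_Ioi_self.trans Set.Ioi_subset_Ici_self).eventuallyLE).trans (htail μ k)
    calc _ ≤ ((k : ℝ) + 2) * (((k : ℝ) + 2)⁻¹) ^ 3 := by gcongr
      _ = _ := by field_simp
  set a : ℕ → ℝ := fun k => √((k : ℝ) + 2) - √((k : ℝ) + 1) with ha
  have ha_nonneg : ∀ k, 0 ≤ a k := fun k =>
    sub_nonneg.2 (Real.sqrt_le_sqrt (by linarith))
  have ha_le : ∀ k, a k ≤ 1 := fun k => by
    refine sub_le_iff_le_add.2 (Real.sqrt_le_iff.2 ⟨by positivity, ?_⟩)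
    nlinarith [Real.sq_sqrt (by positivity : (0 : ℝ) ≤ (k : ℝ) + 1),
      Real.sqrt_nonneg ((k : ℝ) + 1)]
  have hslope : ∀ n, ∑ k ∈ Finset.range n, a k * C / d k ≤ ε := by
    intro n
    have hterm : ∀ k, a k * C / d k ≤ ε / 2 * (1 / 2) ^ k := by
      intro k
      rw [div_le_iff₀ (hd_pos k)]
      have : ε / 2 * (1 / 2) ^ k * d k = C + 1 := by
        simp only [hd, one_div, inv_pow]
        field_simp
      rw [this]
      nlinarith [ha_le k]
    calc _ ≤ ∑ k ∈ Finset.range n, ε / 2 * (1 / 2) ^ k := Finset.sum_le_sum fun k _ => hterm k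
      _ = ε / 2 * ∑ k ∈ Finset.range n, (1 / 2) ^ k := (Finset.mul_sum _ _ _).symm
      _ ≤ ε / 2 * 2 := by
        gcongr
        exact sum_geometric_two_le n
      _ = ε := by ring
  obtain ⟨g, hg_smooth, hg_mono, hg_zero, hg_val, hg_deriv⟩ :=
    exists_smooth_staircase hC ha_nonneg hd_pos htd ht_top hslope
  have hg_nonneg : ∀ r, 0 ≤ g r := fun r => by
    rcases le_total r (t 0) with hr | hr
    · exact (hg_zero r hr).ge
    · exact (hg_zero _ le_rfl).ge.trans (hg_mono hr)
  have hg_sqrt : ∀ k : ℕ, 1 + g (t k) = √((k : ℝ) + 1) := by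
    intro k
    have htele : ∑ i ∈ Finset.range k, a i = √((k : ℝ) + 1) - 1 := by
      have := Finset.sum_range_sub (fun i : ℕ => √((i : ℝ) + 1)) k
      simp only [Nat.cast_add, Nat.cast_one, Nat.cast_zero, zero_add, Real.sqrt_one] at this
      rw [← this]
      refine Finset.sum_congr rfl fun i _ => ?_
      simp only [ha]
      ring_nf
    rw [hg_val, htele]
    ring
  refine ⟨t, ht_strict, ht_top, fun k => by linarith [htd k, hd_ge k], htail, hsum,
    fun x => 1 + g x, contDiff_const.add hg_smooth, hg_mono.const_add 1,
    fun r => by linarith [hg_nonneg r], hg_sqrt, fun r => ?_, fun μ => ?_⟩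
  · simpa using hg_deriv r
  · have hIoi : IntegrableOn (fun x => (1 + g x) ^ 2 * f μ x) (Set.Ioi (t 0)) := by
      refine integrableOn_Ioi_mul_of_summable (c := fun k => (k : ℝ) + 2) ht_strict.monotone
        ht_top (hnonneg μ) ((hint μ _).mono_set Set.Ioi_subset_Ici_self)
        ((continuous_const.add hg_smooth.continuous).pow 2) (fun k x hx => ?_) (hsum μ)
      have hle : 1 + g x ≤ √((k : ℝ) + 2) := by
        have := hg_sqrt (k + 1)
        push_cast at this
        rw [show (k : ℝ) + 2 = k + 1 + 1 by ring, ← this]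
        linarith [hg_mono hx.2]
      rw [abs_of_nonneg (sq_nonneg _)]
      calc (1 + g x) ^ 2 ≤ √((k : ℝ) + 2) ^ 2 := by
            have := hg_nonneg x
            gcongr
        _ = _ := Real.sq_sqrt (by positivity)
    have hIcc : IntegrableOn (fun x => (1 + g x) ^ 2 * f μ x) (Set.Icc 0 (t 0)) := by
      refine ((hint μ 0).mono_set Set.Icc_subset_Ici_self).congr_fun (fun x hx => ?_)
        measurableSet_Icc
      simp [hg_zero x hx.2]
    rw [← Set.Icc_union_Ioi_eq_Ici ht0]
    exact hIcc.union hIoi
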